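/- Let X be a complex Banach space, T a bounded linear operator on X, and β an ordinal. Then 0 ∉ acc^{β+1} σ(T) if and only if there exists a bounded linear operator S on X with ST = TS, S²T = S, and acc^β σ(T − T²S) ⊆ {0}. -/

import Mathlib

open Ordinal Set

/-- The `α`-th Cantor–Bendixson derivative of a set `A ⊆ ℂ`, defined by transfinite
recursion: `cbd A 0 = A`, `cbd A (β+1) = derivedSet (cbd A β)` (the set of accumulation
points of `cbd A β`), and `cbd A α = ⋂_{β < α} cbd A β` for limit ordinals `α`. -/
noncomputable def cbd (A : Set ℂ) (α : Ordinal) : Set ℂ :=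
  Ordinal.limitRecOn α A (fun _ ih => derivedSet ih)
    (fun α _ ih => ⋂ (β : Set.Iio α), ih β.1 β.2)

variable {X : Type*} [NormedAddCommGroup X] [NormedSpace ℂ X] [CompleteSpace X]

/-- The restriction `T_M` of a bounded operator `T` to a `T`-invariant subspace `M`. -/
noncomputable def restr (T : X →L[ℂ] X) (M : Submodule ℂ X)
    (hM : ∀ x ∈ M, T x ∈ M) : M →L[ℂ] M :=
  { toLinearMap := T.toLinearMap.restrict hM
    cont := (T.continuous.comp continuous_subtype_val).subtype_mk _ }

open Filter Topology Metric

lemma cbd_zero (A : Set ℂ) : cbd A 0 = A := by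
  unfold cbd; exact Ordinal.limitRecOn_zero ..

lemma cbd_succ (A : Set ℂ) (β : Ordinal) : cbd A (β + 1) = derivedSet (cbd A β) := by
  unfold cbd; exact Ordinal.limitRecOn_add_one ..

lemma cbd_limit (A : Set ℂ) (α : Ordinal) (h : Order.IsSuccLimit α) :
    cbd A α = ⋂ (β : Set.Iio α), cbd A β.1 := by
  unfold cbd; exact Ordinal.limitRecOn_limit (h := h) ..

lemma cbd_mono {A B : Set ℂ} (h : A ⊆ B) (α : Ordinal) : cbd A α ⊆ cbd B α := by
  induction α using Ordinal.limitRecOn with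
  | zero => simpa [cbd_zero] using h
  | add_one α ih => rw [cbd_succ, cbd_succ]; exact derivedSet_mono _ _ ih
  | limit α hα ih =>
    rw [cbd_limit _ _ hα, cbd_limit _ _ hα]
    exact iInter_mono fun β => ih β.1 β.2

lemma cbd_closed {A : Set ℂ} (h : IsClosed A) (α : Ordinal) :
    IsClosed (cbd A α) ∧ cbd A α ⊆ A := by
  induction α using Ordinal.limitRecOn with
  | zero => simpa [cbd_zero] using h
  | add_one α ih =>
    rw [cbd_succ]
    exact ⟨isClosed_derivedSet _, ((isClosed_iff_derivedSet_subset _).1 ih.1).trans ih.2⟩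
  | limit α hα ih =>
    rw [cbd_limit _ _ hα]
    refine ⟨isClosed_iInter fun β => (ih β.1 β.2).1, ?_⟩
    have h0 : (0 : Ordinal) < α := hα.bot_lt
    exact (iInter_subset _ (⟨0, h0⟩ : Set.Iio α)).trans (ih 0 h0).2

lemma cbd_union_zero (A : Set ℂ) (α : Ordinal) : cbd (A ∪ {0}) α ⊆ cbd A α ∪ {0} := by
  induction α using Ordinal.limitRecOn with
  | zero => simp [cbd_zero]
  | add_one α ih =>
    rw [cbd_succ, cbd_succ]
    refine (derivedSet_mono _ _ ih).trans ?_
    rw [derivedSet_union]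
    exact union_subset_union_right _ ((isClosed_iff_derivedSet_subset _).1 isClosed_singleton)
  | limit α hα ih =>
    rw [cbd_limit _ _ hα, cbd_limit _ _ hα]
    intro x hx
    by_cases h0 : x = 0
    · right; exact h0
    · left
      rw [mem_iInter] at hx ⊢
      intro β
      exact (ih β.1 β.2 (hx β)).resolve_right h0

lemma cbd_local (A U : Set ℂ) (hU : IsOpen U) (α : Ordinal) : cbd A α ∩ U ⊆ cbd (A ∩ U) α := by
  induction α using Ordinal.limitRecOn with
  | zero => simp [cbd_zero]
  | add_one α ih =>
    rw [cbd_succ, cbd_succ]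
    rintro x ⟨hx, hxU⟩
    refine derivedSet_mono _ _ ih ?_
    rw [mem_derivedSet, accPt_iff_nhds] at hx ⊢
    intro V hV
    obtain ⟨y, hy, hne⟩ := hx (V ∩ U) (inter_mem hV (hU.mem_nhds hxU))
    exact ⟨y, ⟨hy.1.1, hy.2, hy.1.2⟩, hne⟩
  | limit α hα ih =>
    rw [cbd_limit _ _ hα, cbd_limit _ _ hα]
    rintro x ⟨hx, hxU⟩
    rw [mem_iInter] at hx ⊢
    intro β
    exact ih β.1 β.2 ⟨hx β, hxU⟩

lemma countable_of_local {A W : Set ℂ} (h : ∀ x ∈ W, ∃ V ∈ 𝓝 x, (A ∩ V).Countable) :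
    (A ∩ W).Countable := by
  choose! V hV hc using h
  obtain ⟨t, htW, htc, ht⟩ := TopologicalSpace.countable_cover_nhdsWithin
    (f := V) (s := W) (fun x hx => mem_nhdsWithin_of_mem_nhds (hV x hx))
  refine (htc.biUnion fun x hx => hc x (htW hx)).mono ?_
  rintro y ⟨hyA, hyW⟩
  obtain ⟨x, hx, hy⟩ := mem_iUnion₂.1 (ht hyW)
  exact mem_iUnion₂.2 ⟨x, hx, hyA, hy⟩

lemma cbd_countable {A : Set ℂ} (hA : IsClosed A) (α : Ordinal) :
    ∀ x ∉ cbd A α, ∃ V ∈ 𝓝 x, (A ∩ V).Countable := by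
  induction α using Ordinal.limitRecOn with
  | zero =>
    intro x hx
    rw [cbd_zero] at hx
    exact ⟨Aᶜ, hA.isOpen_compl.mem_nhds hx, by simp⟩
  | add_one α ih =>
    intro x hx
    rw [cbd_succ, mem_derivedSet, accPt_iff_nhds] at hx
    push Not at hx
    obtain ⟨V, hV, h⟩ := hx
    refine ⟨V, hV, ?_⟩
    have h1 : (A ∩ (V \ {x})).Countable := countable_of_local fun y hy => ih y fun hy' =>
      hy.2 (h y ⟨hy.1, hy'⟩)
    refine (h1.union (countable_singleton x)).mono ?_
    rintro y ⟨hyA, hyV⟩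
    by_cases hxy : y = x
    · right; exact hxy
    · left; exact ⟨hyA, hyV, hxy⟩
  | limit α hα ih =>
    intro x hx
    rw [cbd_limit _ _ hα, mem_iInter] at hx
    push Not at hx
    obtain ⟨β, hβ⟩ := hx
    exact ih β.1 β.2 x hβ

section riesz

variable {A : Type*} [NormedRing A] [NormedAlgebra ℂ A] [CompleteSpace A]

lemma commute_ringInverse {a b : A} (h : Commute a b) : Commute a (Ring.inverse b) := by
  by_cases hb : IsUnit b
  · obtain ⟨u, rfl⟩ := hb
    rw [Ring.inverse_unit]
    exact h.units_inv_right
  · rw [Ring.inverse_non_unit _ hb]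
    exact Commute.zero_right a

lemma circleIntegral_clm {E F : Type*} [NormedAddCommGroup E] [NormedSpace ℂ E] [CompleteSpace E]
    [NormedAddCommGroup F] [NormedSpace ℂ F] [CompleteSpace F] (L : E →L[ℂ] F) {f : ℂ → E}
    {c : ℂ} {r : ℝ} (hf : CircleIntegrable f c r) :
    L (∮ z in C(c, r), f z) = ∮ z in C(c, r), L (f z) := by
  unfold circleIntegral
  rw [← ContinuousLinearMap.intervalIntegral_comp_comm L hf.out]
  simp

lemma mul_circleIntegral (a : A) {f : ℂ → A} {c : ℂ} {r : ℝ} (hf : CircleIntegrable f c r) :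
    a * (∮ z in C(c, r), f z) = ∮ z in C(c, r), a * f z :=
  circleIntegral_clm (ContinuousLinearMap.mul ℂ A a) hf

lemma circleIntegral_mul (a : A) {f : ℂ → A} {c : ℂ} {r : ℝ} (hf : CircleIntegrable f c r) :
    (∮ z in C(c, r), f z) * a = ∮ z in C(c, r), f z * a :=
  circleIntegral_clm ((ContinuousLinearMap.mul ℂ A).flip a) hf

lemma commute_circleIntegral (a : A) {f : ℂ → A} {c : ℂ} {r : ℝ} (hr : 0 ≤ r)
    (hf : CircleIntegrable f c r)
    (h : ∀ z ∈ sphere c r, Commute a (f z)) : Commute a (∮ z in C(c, r), f z) := by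
  unfold Commute SemiconjBy
  rw [mul_circleIntegral a hf, circleIntegral_mul a hf]
  exact circleIntegral.integral_congr hr fun z hz => h z hz

lemma integral_sub_inv_of_not_mem {w : ℂ} {r : ℝ} (hr : 0 ≤ r) (hw : r < ‖w‖) :
    (∮ z in C(0, r), (z - w)⁻¹) = 0 := by
  refine Complex.circleIntegral_eq_zero_of_differentiable_on_off_countable hr
    (countable_empty) ?_ ?_
  · refine ContinuousOn.inv₀ (by fun_prop) ?_
    intro z hz h
    rw [sub_eq_zero] at h
    subst h
    simp at hz; linarith
  · intro z hz
    refine DifferentiableAt.inv (by fun_prop) ?_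
    intro h
    rw [sub_eq_zero] at h
    subst h
    have := hz.1
    simp at this; linarith

/-- Riesz decomposition along a circle avoiding the spectrum. -/
lemma riesz (T : A) {r : ℝ} (hr : 0 < r) (hs : ∀ z ∈ spectrum ℂ T, ‖z‖ ≠ r) :
    ∃ P : A, Commute P T ∧ P * P = P ∧
      (∀ w : ℂ, r < ‖w‖ → ∃ F : A, Commute F T ∧ Commute F P ∧ (algebraMap ℂ A w - T) * F = P) ∧
      (∀ w : ℂ, ‖w‖ < r → ∃ F : A, Commute F T ∧ Commute F P ∧
        (algebraMap ℂ A w - T) * F = 1 - P) := by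
  classical
  have hpi : (2 * (Real.pi : ℂ) * Complex.I) ≠ 0 := Complex.two_pi_I_ne_zero
  have hres : ∀ z : ℂ, ‖z‖ = r → z ∈ resolventSet ℂ T := fun z hz => by
    by_contra h; exact hs z h hz
  set R : ℂ → A := resolvent T with hR
  have hRl : ∀ z ∈ resolventSet ℂ T, (algebraMap ℂ A z - T) * R z = 1 := fun z hz =>
    Ring.mul_inverse_cancel _ hz
  have hRr : ∀ z ∈ resolventSet ℂ T, R z * (algebraMap ℂ A z - T) = 1 := fun z hz =>
    Ring.inverse_mul_cancel _ hz
  have hRd : ∀ z ∈ resolventSet ℂ T, DifferentiableAt ℂ R z := fun z hz =>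
    (spectrum.hasDerivAt_resolvent_const_left hz).differentiableAt
  have hRcomm : ∀ a : A, Commute a T → ∀ z, Commute a (R z) := by
    intro a ha z
    have : Commute a (algebraMap ℂ A z - T) := Commute.sub_right (Algebra.commutes z a).symm ha
    exact commute_ringInverse this
  have hRc : ContinuousOn R (sphere 0 r) := fun z hz =>
    (hRd z (hres z (by simpa using hz))).continuousAt.continuousWithinAt
  have hRi : CircleIntegrable R 0 r := hRc.circleIntegrable hr.le
  set c : ℂ := (2 * (Real.pi : ℂ) * Complex.I)⁻¹ with hc
  set P : A := c • ∮ z in C(0, r), R z with hP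
  set K : ℂ → A := fun w => c • ∮ z in C(0, r), (z - w)⁻¹ • R z with hK
  have hinvc : ∀ w : ℂ, ‖w‖ ≠ r → ContinuousOn (fun z : ℂ => (z - w)⁻¹) (sphere 0 r) := by
    intro w hw
    refine ContinuousOn.inv₀ (by fun_prop) ?_
    intro z hz h
    rw [sub_eq_zero] at h
    subst h
    exact hw (by simpa using hz)
  have hKi : ∀ w : ℂ, ‖w‖ ≠ r → CircleIntegrable (fun z => (z - w)⁻¹ • R z) 0 r := fun w hw =>
    ((hinvc w hw).smul hRc).circleIntegrable hr.le
  have hPcomm : ∀ a : A, Commute a T → Commute a P := fun a ha =>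
    (commute_circleIntegral a hr.le hRi fun z _ => hRcomm a ha z).smul_right c
  have hKcomm : ∀ a : A, Commute a T → ∀ w : ℂ, ‖w‖ ≠ r → Commute a (K w) := fun a ha w hw =>
    (commute_circleIntegral a hr.le (hKi w hw) fun z _ => (hRcomm a ha z).smul_right _).smul_right c
  have hPT : Commute P T := (hPcomm T (Commute.refl T)).symm
  have hKT : ∀ w : ℂ, ‖w‖ ≠ r → Commute (K w) T := fun w hw => (hKcomm T (Commute.refl T) w hw).symm
  have hKP : ∀ w : ℂ, ‖w‖ ≠ r → Commute (K w) P := fun w hw => (hKcomm P hPT w hw).symm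
  have key : ∀ w : ℂ, ‖w‖ ≠ r → (algebraMap ℂ A w - T) * K w =
      (c * ∮ z in C(0, r), (z - w)⁻¹) • (1 : A) - P := by
    intro w hw
    have e1 : (algebraMap ℂ A w - T) * (∮ z in C(0, r), (z - w)⁻¹ • R z)
        = ∮ z in C(0, r), ((z - w)⁻¹ • (1 : A) - R z) := by
      rw [mul_circleIntegral _ (hKi w hw)]
      refine circleIntegral.integral_congr hr.le fun z hz => ?_
      have hz' : ‖z‖ = r := by simpa using hz
      have hne : z - w ≠ 0 := fun h => hw (by rw [← sub_eq_zero.1 h]; exact hz')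
      have h1 := hRl z (hres z hz')
      have h2 : (algebraMap ℂ A w - T) * R z = 1 - (z - w) • R z := by
        rw [← h1, Algebra.smul_def, map_sub, ← sub_mul]; congr 1; abel
      simp only [mul_smul_comm, h2, smul_sub, smul_smul, inv_mul_cancel₀ hne, one_smul]
    have e2 : (∮ z in C(0, r), ((z - w)⁻¹ • (1 : A) - R z)) =
        (∮ z in C(0, r), (z - w)⁻¹) • (1 : A) - ∮ z in C(0, r), R z := by
      rw [circleIntegral.integral_sub _ hRi, circleIntegral.integral_smul_const]
      exact ((hinvc w hw).smul continuousOn_const).circleIntegrable hr.le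
    simp only [hK, hP]
    rw [mul_smul_comm, e1, e2, smul_sub, smul_smul]
  have keyout : ∀ w : ℂ, r < ‖w‖ → (algebraMap ℂ A w - T) * K w = - P := by
    intro w hw
    rw [key w hw.ne', integral_sub_inv_of_not_mem hr.le hw]; simp
  have keyin : ∀ w : ℂ, ‖w‖ < r → (algebraMap ℂ A w - T) * K w = 1 - P := by
    intro w hw
    rw [key w hw.ne, circleIntegral.integral_sub_inv_of_mem_ball (by simpa using hw), hc,
      inv_mul_cancel₀ hpi, one_smul]
  have hidem : P * (1 - P) = 0 := by
    obtain ⟨s, hs0, hsr, hann⟩ : ∃ s : ℝ, 0 < s ∧ s < r ∧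
        ∀ z : ℂ, s ≤ ‖z‖ → ‖z‖ ≤ r → z ∈ resolventSet ℂ T := by
      have hcl : IsClosed (norm '' spectrum ℂ T) :=
        ((spectrum.isCompact T).image continuous_norm).isClosed
      have hr' : (norm '' spectrum ℂ T)ᶜ ∈ 𝓝 r := hcl.isOpen_compl.mem_nhds (by
        rintro ⟨z, hz, hzr⟩; exact hs z hz hzr)
      obtain ⟨ε, hε, hb⟩ := Metric.mem_nhds_iff.1 hr'
      refine ⟨max (r / 2) (r - ε / 2), by positivity, max_lt (by linarith) (by linarith), ?_⟩
      intro z hz1 hz2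
      by_contra h
      have h3 := le_of_max_le_right hz1
      refine hb (a := ‖z‖) ?_ ⟨z, h, rfl⟩
      rw [Metric.mem_ball, Real.dist_eq, abs_lt]; constructor <;> linarith
    have hPs : P = c • ∮ z in C(0, s), R z := by
      rw [hP]; congr 1
      refine Complex.circleIntegral_eq_of_differentiable_on_annulus_off_countable hs0 hsr.le
        countable_empty ?_ ?_
      · intro z hz
        refine (hRd z (hann z ?_ ?_)).continuousAt.continuousWithinAt
        · simpa using hz.2
        · simpa using hz.1
      · intro z hz
        refine hRd z (hann z ?_ ?_)
        · have := hz.1.2; simp at this; exact this.le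
        · have := hz.1.1; simp at this; exact this.le
    have hRis : CircleIntegrable R 0 s := by
      refine ContinuousOn.circleIntegrable hs0.le fun z hz => ?_
      have hz' : ‖z‖ = s := by simpa using hz
      exact (hRd z (hann z hz'.ge (hz'.le.trans hsr.le))).continuousAt.continuousWithinAt
    have hKd : ∀ z ∈ ball (0 : ℂ) r, DifferentiableAt ℂ K z := by
      have := hasFPowerSeriesOn_cauchy_integral (f := R) (c := 0) (R := r.toNNReal) (by rwa [Real.coe_toNNReal r hr.le])
        (by simpa using hr)
      rw [Real.coe_toNNReal r hr.le] at this
      have h2 := this.differentiableOn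
      intro z hz
      refine h2.differentiableAt (IsOpen.mem_nhds Metric.isOpen_eball ?_)
      rw [Metric.eball_coe, Real.coe_toNNReal r hr.le]
      exact hz
    rw [hPs, smul_mul_assoc, circleIntegral_mul _ hRis]
    have : (∮ z in C(0, s), R z * (1 - P)) = ∮ z in C(0, s), K z := by
      refine circleIntegral.integral_congr hs0.le fun z hz => ?_
      have hz' : ‖z‖ = s := by simpa using hz
      rw [← keyin z (by linarith), ← mul_assoc, hRr z (hann z hz'.ge (hz'.le.trans hsr.le)),
        one_mul]
    rw [← hPs, this, Complex.circleIntegral_eq_zero_of_differentiable_on_off_countable hs0.le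
      countable_empty, smul_zero]
    · intro z hz
      refine (hKd z ?_).continuousAt.continuousWithinAt
      simp at hz ⊢; linarith
    · intro z hz
      refine hKd z ?_
      have := hz.1
      simp at this ⊢; linarith
  refine ⟨P, hPT, ?_, ?_, ?_⟩
  · rw [_root_.mul_sub, mul_one, sub_eq_zero] at hidem; exact hidem.symm
  · intro w hw
    refine ⟨-K w, (hKT w hw.ne').neg_left, (hKP w hw.ne').neg_left, ?_⟩
    rw [mul_neg, keyout w hw, neg_neg]
  · intro w hw
    exact ⟨K w, hKT w hw.ne, hKP w hw.ne, keyin w hw⟩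

/-- The algebraic part of the forward direction. -/
lemma exists_pinv (T : A) {r : ℝ} (hr : 0 < r) (hs : ∀ z ∈ spectrum ℂ T, ‖z‖ ≠ r) :
    ∃ S : A, S * T = T * S ∧ S * S * T = S ∧
      spectrum ℂ (T - T * T * S) ⊆ (spectrum ℂ T ∩ closedBall 0 r) ∪ {0} := by
  obtain ⟨P, hPT, hPP, hout, hin⟩ := riesz T hr hs
  obtain ⟨F, hFT, hFP, hF⟩ := hin 0 (by simpa using hr)
  have hTF : T * F = P - 1 := by
    have : -(T * F) = 1 - P := by simpa using hF
    rw [← neg_sub, ← this, neg_neg]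
  have hFT' : F * T = P - 1 := hFT.eq.trans hTF
  have hQ : (1 - P) * (1 - P) = 1 - P := by
    rw [sub_mul, _root_.mul_sub, _root_.mul_sub, hPP]; simp
  set S : A := -(F * (1 - P)) with hS
  have hFQ : Commute F (1 - P) := (Commute.one_right F).sub_right hFP
  have hTS : T * S = 1 - P := by
    rw [hS, mul_neg, ← mul_assoc, hTF, ← neg_mul, neg_sub, hQ]
  have hST : S * T = 1 - P := by
    have : Commute (1 - P) T := (Commute.one_left T).sub_left hPT
    rw [hS, neg_mul, mul_assoc, this.eq, ← mul_assoc, hFT', ← neg_mul, neg_sub, hQ]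
  have hTP : T - T * T * S = T * P := by rw [mul_assoc, hTS, _root_.mul_sub, mul_one, sub_sub_cancel]
  refine ⟨S, hST.trans hTS.symm, ?_, ?_⟩
  · rw [mul_assoc, hST, hS, neg_mul, mul_assoc, hQ]
  rw [hTP]
  intro w hw
  by_contra hcon
  simp only [mem_union, mem_inter_iff, mem_singleton_iff, not_or, not_and] at hcon
  obtain ⟨hcon, hw0⟩ := hcon
  obtain ⟨G, hGT, hGP, hG⟩ : ∃ G : A, Commute G T ∧ Commute G P ∧
      (algebraMap ℂ A w - T) * G = P := by
    by_cases hwr : r < ‖w‖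
    · exact hout w hwr
    · have hwres : w ∈ resolventSet ℂ T := by
        by_contra h
        exact hcon h (by simpa using hwr)
      have h1 : ∀ a : A, Commute a T → Commute a (resolvent T w) := fun a ha =>
        commute_ringInverse (Commute.sub_right (Algebra.commutes w a).symm ha)
      have h2 := h1 T (Commute.refl T)
      have h3 := h1 P hPT
      refine ⟨resolvent T w * P, h2.symm.mul_left hPT, h3.symm.mul_left (Commute.refl P), ?_⟩
      rw [← mul_assoc, resolvent, Ring.mul_inverse_cancel _ hwres, one_mul]
  apply hw
  have hww : algebraMap ℂ A w * algebraMap ℂ A w⁻¹ = 1 := by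
    rw [← map_mul, mul_inv_cancel₀ hw0, map_one]
  have hcen : ∀ (u : ℂ) (a : A), Commute (algebraMap ℂ A u) a := Algebra.commutes
  set a := algebraMap ℂ A w
  set b := algebraMap ℂ A w⁻¹
  have hab : a * b = 1 := hww
  set H := G * P + b * (1 - P) with hH
  have hPQ : P * (1 - P) = 0 := by rw [_root_.mul_sub, mul_one, hPP, _root_.sub_self]
  have hmul : (a - T * P) * H = 1 := by
    have e1 : (a - T * P) * (G * P) = P := by
      have : (a - T * P) * (G * P) = (a - T) * G * P := by
        rw [sub_mul, sub_mul, sub_mul, mul_assoc T P, ← mul_assoc P G, ← hGP.eq, mul_assoc G P P,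
          hPP, mul_assoc, mul_assoc]
      rw [this, hG, hPP]
    have e2 : (a - T * P) * (b * (1 - P)) = 1 - P := by
      rw [← mul_assoc, sub_mul, hab, sub_mul, one_mul, mul_assoc (T * P), (hcen w⁻¹ (1 - P)).eq,
        ← mul_assoc, mul_assoc T, hPQ]; simp
    rw [hH, mul_add, e1, e2, _root_.add_sub_cancel]
  have hcomm : Commute (a - T * P) H := by
    have hb : ∀ x, Commute x b := fun x => (hcen w⁻¹ x).symm
    have hTQ : Commute (T * P) (1 - P) :=
      (Commute.one_right _).sub_right (hPT.symm.mul_left (Commute.refl P))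
    have hTPG : Commute (T * P) G := hGT.symm.mul_left hGP.symm
    have hTPP : Commute (T * P) P := hPT.symm.mul_left (Commute.refl P)
    exact (hcen w H).sub_left ((hTPG.mul_right hTPP).add_right ((hb _).mul_right hTQ))
  exact ⟨⟨a - T * P, H, hmul, hcomm.eq ▸ hmul⟩, rfl⟩

lemma spectrum_small (T S : A) (h1 : S * T = T * S) (h2 : S * S * T = S) :
    ∃ ε > 0, spectrum ℂ T ∩ ball 0 ε ⊆ spectrum ℂ (T - T * T * S) := by
  refine ⟨(‖S‖ + 1)⁻¹, by positivity, ?_⟩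
  rintro w ⟨hw, hwε⟩ hcon
  apply hw
  have hcomm : Commute S T := h1
  set a := algebraMap ℂ A w with ha
  have hcen : ∀ x : A, Commute a x := Algebra.commutes w
  change IsUnit (a - (T - T * T * S)) at hcon
  have hu : IsUnit (1 - a * S) := by
    apply isUnit_one_sub_of_norm_lt_one
    rw [ha, ← Algebra.smul_def]
    refine (norm_smul_le _ _).trans_lt ?_
    rw [mem_ball_zero_iff] at hwε
    have : ‖w‖ * (‖S‖ + 1) < 1 := by rwa [← lt_inv_mul_iff₀' (by positivity), mul_one] 
    nlinarith [norm_nonneg w]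
  obtain ⟨E, hE⟩ : ∃ E, E = T * S := ⟨_, rfl⟩
  have hEE : E * E = E := by
    rw [hE]
    calc T * S * (T * S) = T * (S * T * S) := by noncomm_ring
      _ = T * (S * S * T) := by rw [mul_assoc S T S, ← h1, ← mul_assoc S S T]
      _ = T * S := by rw [h2]
  have hET : Commute E T := hE ▸ (Commute.refl T).mul_left hcomm
  have hES : Commute E S := hE ▸ hcomm.symm.mul_left (Commute.refl S)
  have hSE : S * E = S := by rw [hE, ← h1, ← mul_assoc, h2]
  have hD : T - T * T * S = T * (1 - E) := by rw [mul_assoc, ← hE, _root_.mul_sub, mul_one]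
  rw [hD] at hcon
  set D := a - T * (1 - E) with hDd
  set U := 1 - a * S with hUd
  have hTD : Commute T D := (hcen T).symm.sub_right
    ((Commute.refl T).mul_right ((Commute.one_right T).sub_right hET.symm))
  have hTU : Commute T U := (Commute.one_right T).sub_right ((hcen T).symm.mul_right hcomm.symm)
  have hTDi := commute_ringInverse hTD
  have hTUi := commute_ringInverse hTU
  have hDi := Ring.mul_inverse_cancel _ hcon
  have hUi := Ring.mul_inverse_cancel _ hu
  set Di := Ring.inverse D
  set Ui := Ring.inverse U
  set H := (1 - E) * Di - S * Ui with hH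
  have hQQ : (1 - E) * (1 - E) = 1 - E := by
    rw [sub_mul, _root_.mul_sub, _root_.mul_sub, hEE]; simp
  have e1 : (a - T) * (1 - E) = (1 - E) * D := by
    have hQT : Commute (1 - E) T := (Commute.one_left T).sub_left hET
    rw [hDd, _root_.mul_sub (1 - E), ← mul_assoc, hQT.eq, mul_assoc, hQQ, sub_mul, (hcen (1 - E)).eq]
  have e2 : (a - T) * S = -(E * U) := by
    rw [hUd, _root_.mul_sub, mul_one, neg_sub, sub_mul, ← hE, (hcen S).eq, ← mul_assoc, hES.eq, hSE]
  have hmul : (a - T) * H = 1 := by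
    rw [hH, _root_.mul_sub, ← mul_assoc, ← mul_assoc, e1, e2, mul_assoc, hDi, neg_mul, mul_assoc, hUi]
    simp
  have hTH : Commute T H :=
    (((Commute.one_right T).sub_right hET.symm).mul_right hTDi).sub_right
      (hcomm.symm.mul_right hTUi)
  have hc : Commute (a - T) H := (hcen H).sub_left hTH
  exact ⟨⟨a - T, H, hmul, hc.eq ▸ hmul⟩, rfl⟩

end riesz

theorem not_mem_cbd_succ_iff_exists_pseudoinverse (T : X →L[ℂ] X) (β : Ordinal) :
    (0 : ℂ) ∉ cbd (spectrum ℂ T) (β + 1) ↔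
      ∃ S : X →L[ℂ] X, S * T = T * S ∧ S * S * T = S ∧
        cbd (spectrum ℂ (T - T * T * S)) β ⊆ {0} := by
  have hcl : IsClosed (spectrum ℂ T) := spectrum.isClosed T
  rw [cbd_succ, mem_derivedSet, accPt_iff_nhds]
  constructor
  · intro h
    push Not at h
    obtain ⟨U, hU, h⟩ := h
    obtain ⟨ε, hε, hb⟩ := Metric.mem_nhds_iff.1 hU
    have hcount : (spectrum ℂ T ∩ (ball 0 ε \ {0})).Countable :=
      countable_of_local fun x hx => cbd_countable hcl β x fun hx' =>
        hx.2 (h x ⟨hb hx.1, hx'⟩)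
    obtain ⟨r, hr, hr'⟩ : ∃ r ∈ Ioo 0 ε, r ∉ norm '' (spectrum ℂ T ∩ (ball 0 ε \ {0})) := by
      by_contra hcon
      push Not at hcon
      exact (Cardinal.Real.Ioo_countable_iff.1 ((hcount.image norm).mono hcon)).not_gt hε
    obtain ⟨S, hS1, hS2, hS3⟩ := exists_pinv T hr.1 (fun z hz hzr => hr' ⟨z, ⟨hz, by
      simp [hzr, hr.2], fun h0 => by
        rw [mem_singleton_iff] at h0
        rw [h0, norm_zero] at hzr; exact hr.1.ne hzr⟩, hzr⟩)
    refine ⟨S, hS1, hS2, ?_⟩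
    refine (cbd_mono hS3 β).trans ((cbd_union_zero _ β).trans (union_subset ?_ subset_rfl))
    intro x hx
    have hx1 := cbd_mono inter_subset_left β hx
    have hx2 := (cbd_closed (hcl.inter isClosed_closedBall) β).2 hx
    exact h x ⟨hb (closedBall_subset_ball hr.2 hx2.2), hx1⟩
  · rintro ⟨S, hS1, hS2, hS3⟩ hacc
    obtain ⟨ε, hε, hsub⟩ := spectrum_small T S hS1 hS2
    obtain ⟨y, hy, hne⟩ := hacc (ball 0 ε) (ball_mem_nhds _ hε)
    exact hne (hS3 (cbd_mono hsub β (cbd_local _ _ isOpen_ball β ⟨hy.2, hy.1⟩)))
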